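/- Let R be a commutative ring and f ∈ R. Then Loc(R/(f))^⊥ = Loc(R_f) in D(R). Moreover Loc(R_f) is the essential image of the functor D(R_f) → D(R) induced by restriction of scalars along the localization map R → R_f. -/

import Mathlib

open CategoryTheory CategoryTheory.Limits CategoryTheory.Pretriangulated ZeroObject

universe w w' v u

section TriangulatedDefs

variable {T : Type u} [Category.{v} T] [Preadditive T] [HasZeroObject T]
  [HasShift T ℤ] [∀ n : ℤ, (shiftFunctor T n).Additive] [Pretriangulated T]

/-- A localizing subcategory of a (pre)triangulated category, encoded as a set of
objects: it is closed under isomorphisms, contains the zero object, is stable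
under shifts, closed under cones of distinguished triangles (hence a full
triangulated subcategory), and closed under arbitrary small coproducts
(phrased via colimit cofans, so that no global existence of coproducts
is needed). -/
structure IsLocalizingSub (S : Set T) : Prop where
  zero_mem : (0 : T) ∈ S
  mem_of_iso : ∀ {x y : T}, (x ≅ y) → x ∈ S → y ∈ S
  shift_mem : ∀ (n : ℤ) {x : T}, x ∈ S → x⟦n⟧ ∈ S
  cone_mem : ∀ (Tr : Triangle T), Tr ∈ distinguishedTriangles →
    Tr.obj₁ ∈ S → Tr.obj₂ ∈ S → Tr.obj₃ ∈ S
  coprod_mem : ∀ {ι : Type w} (f : ι → T) (c : Cofan f), IsColimit c →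
    (∀ i, f i ∈ S) → c.pt ∈ S

/-- A colocalizing subcategory: as `IsLocalizingSub` but with products instead
of coproducts. -/
structure IsColocalizingSub (S : Set T) : Prop where
  zero_mem : (0 : T) ∈ S
  mem_of_iso : ∀ {x y : T}, (x ≅ y) → x ∈ S → y ∈ S
  shift_mem : ∀ (n : ℤ) {x : T}, x ∈ S → x⟦n⟧ ∈ S
  cone_mem : ∀ (Tr : Triangle T), Tr ∈ distinguishedTriangles →
    Tr.obj₁ ∈ S → Tr.obj₂ ∈ S → Tr.obj₃ ∈ S
  prod_mem : ∀ {ι : Type w} (f : ι → T) (c : Fan f), IsLimit c →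
    (∀ i, f i ∈ S) → c.pt ∈ S

/-- `Loc S`: the smallest localizing subcategory containing the set of
objects `S` (the intersection of all localizing subcategories containing it). -/
def Loc (S : Set T) : Set T :=
  ⋂₀ {L : Set T | IsLocalizingSub.{w} L ∧ S ⊆ L}

/-- The right orthogonal of a set of objects. -/
def rightOrth (C : Set T) : Set T :=
  {x : T | ∀ ⦃c : T⦄, c ∈ C → ∀ (g : c ⟶ x), g = 0}

end TriangulatedDefs

section CompactDefs

variable {T : Type u} [Category.{v} T] [Preadditive T]

/-- The canonical comparison map `⨁ᵢ Hom(x, fᵢ) →+ Hom(x, ∐ f)` associated to a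
cofan `c` on a family `f`. -/
noncomputable def cofanHomComparison {ι : Type w} (x : T) (f : ι → T) (c : Cofan f) :
    (Π₀ i, (x ⟶ f i)) →+ (x ⟶ c.pt) :=
  letI := Classical.decEq ι
  DFinsupp.sumAddHom (fun i => AddMonoidHom.mk' (fun φ => φ ≫ c.inj i)
    (fun φ ψ => Preadditive.add_comp _ _ _ φ ψ (c.inj i)))

/-- An object `x` is compact if `Hom(x, -)` commutes with arbitrary small
coproducts, i.e. for every colimit cofan on a family `f`, the canonical map
`⨁ᵢ Hom(x, fᵢ) → Hom(x, ∐ f)` is bijective. -/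
def IsCompactObj (x : T) : Prop :=
  ∀ ⦃ι : Type w⦄ (f : ι → T) (c : Cofan f), IsColimit c →
    Function.Bijective (cofanHomComparison x f c)

end CompactDefs

section DR

variable (R : Type u) [CommRing R] [HasDerivedCategory.{w'} (ModuleCat.{u} R)]

/-- The `R`-module `M`, regarded as an object of the derived category `D(R)`,
as a complex concentrated in degree `0`. -/
noncomputable def smod (M : ModuleCat.{u} R) : DerivedCategory (ModuleCat.{u} R) :=
  (DerivedCategory.singleFunctor (ModuleCat.{u} R) 0).obj M

end DR

/-!
The three classes of objects all equal the class of `x` on which `f` acts invertibly.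

* Any localizing `P` containing `R/(f)` contains every module killed by `f`, because `R/(f)`
  generates `D(R/(f))`. In particular the kernel and the cokernel of `f : R ⟶ R` lie in `P`, so
  that `f : R ⟶ R` induces bijections on maps to objects of `P^⊥`. If `x ∈ P^⊥`, the cone `z` of
  `f : x ⟶ x` lies in `P^⊥` and is killed by `f²`. Hence `f²` is both bijective and zero on
  `Hom(R, z)`, and likewise on the shifts. As `R` generates `D(R)`, it follows that `z = 0`.
* If `f` acts invertibly on a complex `K`, it does so on its homology, and by flatness of `R_f`
  the unit `K ⟶ R_f ⊗ K` is a quasi-isomorphism.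
* A complex of `R_f`-modules lies in `Loc(R_f)` because `R_f` generates `D(R_f)`.

Generation by a separator `G`: let `P` be localizing with `G ∈ P`. The cone of a map to `x` from a
sum of shifts of `G`, indexed by all the cycles of `x`, gives `x ⟶ y` which is zero on homology and
has its fibre in `P`. Iterating, one gets a sequence `x = X₀ ⟶ X₁ ⟶ ⋯` which is zero on homology,
so its telescope map `⨁ₙ Xₙ ⟶ ⨁ₙ Xₙ` is an isomorphism. Modulo `P` it agrees with the telescope
map of the constant sequence `x`, which is a split monomorphism with complement `x`.
-/

section Homology

variable {J : Type*} [Category* J] {D E : Type*} [Category* D] [Category* E]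

/-- The comparison morphism `colimit (K ⋙ F) ⟶ F.obj (colimit K)`, as a natural transformation
in the functor `F`. -/
@[simps]
noncomputable def colimitPostNatTrans (K : J ⥤ D) [HasColimit K] [HasColimitsOfShape J E] :
    (Functor.whiskeringLeft J D E).obj K ⋙ colim ⟶ (evaluation D E).obj (colimit K) where
  app F := colimit.post K F

variable [Abelian E] [HasColimitsOfShape J E] [HasExactColimitsOfShape J E]

lemma preservesColimitsOfShape_homology [HasColimitsOfShape J D] (S : ShortComplex (D ⥤ E))
    [PreservesColimitsOfShape J S.X₁] [PreservesColimitsOfShape J S.X₂]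
    [PreservesColimitsOfShape J S.X₃] : PreservesColimitsOfShape J S.homology where
  preservesColimit {K} := by
    let τ := colimitPostNatTrans (E := E) K
    have hτ (F : D ⥤ E) [PreservesColimitsOfShape J F] : IsIso (τ.app F) :=
      inferInstanceAs (IsIso (colimit.post K F))
    have : IsIso (S.mapNatTrans τ).τ₁ := hτ S.X₁
    have : IsIso (S.mapNatTrans τ).τ₂ := hτ S.X₂
    have : IsIso (S.mapNatTrans τ).τ₃ := hτ S.X₃
    have : IsIso (S.mapNatTrans τ) := ShortComplex.isIso_of_isIso _
    have : IsIso (colimit.post K S.homology) := by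
      change IsIso (τ.app S.homology)
      rw [NatTrans.app_homology]
      infer_instance
    exact preservesColimit_of_isIso_post S.homology K

lemma preservesColimitsOfShape_comp_homologyFunctor [HasColimitsOfShape J D]
    (F : D ⥤ ShortComplex E) [PreservesColimitsOfShape J (F ⋙ ShortComplex.π₁)]
    [PreservesColimitsOfShape J (F ⋙ ShortComplex.π₂)]
    [PreservesColimitsOfShape J (F ⋙ ShortComplex.π₃)] :
    PreservesColimitsOfShape J (F ⋙ ShortComplex.homologyFunctor E) := by
  let S : ShortComplex (D ⥤ E) := (ShortComplex.functorEquivalence D E).inverse.obj F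
  have : PreservesColimitsOfShape J S.homology :=
    have : PreservesColimitsOfShape J S.X₁ := ‹PreservesColimitsOfShape J (F ⋙ ShortComplex.π₁)›
    have : PreservesColimitsOfShape J S.X₂ := ‹PreservesColimitsOfShape J (F ⋙ ShortComplex.π₂)›
    have : PreservesColimitsOfShape J S.X₃ := ‹PreservesColimitsOfShape J (F ⋙ ShortComplex.π₃)›
    preservesColimitsOfShape_homology S
  let e (X : D) : S.homology.obj X ≅ (F.obj X).homology :=
    (S.mapHomologyIso ((evaluation D E).obj X)).symm
  have he {X Y : D} (f : X ⟶ Y) :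
      S.homology.map f ≫ (e Y).hom = (e X).hom ≫ ShortComplex.homologyMap (F.map f) :=
    (Iso.eq_comp_inv _).1
      ((NatTrans.app_homology ((evaluation D E).map f) S).trans (Category.assoc _ _ _).symm)
  exact preservesColimitsOfShape_of_natIso (NatIso.ofComponents e he)

instance {ι : Type*} (c : ComplexShape ι) (i : ι) :
    PreservesColimitsOfShape J (HomologicalComplex.homologyFunctor E c i) :=
  let F := HomologicalComplex.shortComplexFunctor E c i
  have : PreservesColimitsOfShape J (F ⋙ ShortComplex.π₁) :=
    inferInstanceAs (PreservesColimitsOfShape J (HomologicalComplex.eval E c (c.prev i)))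
  have : PreservesColimitsOfShape J (F ⋙ ShortComplex.π₂) :=
    inferInstanceAs (PreservesColimitsOfShape J (HomologicalComplex.eval E c i))
  have : PreservesColimitsOfShape J (F ⋙ ShortComplex.π₃) :=
    inferInstanceAs (PreservesColimitsOfShape J (HomologicalComplex.eval E c (c.next i)))
  preservesColimitsOfShape_comp_homologyFunctor F

lemma quasiIso_colimMap {ι : Type*} {c : ComplexShape ι} {X Y : J ⥤ HomologicalComplex E c}
    (α : X ⟶ Y) (hα : ∀ j, QuasiIso (α.app j)) : QuasiIso (colimMap α) where
  quasiIsoAt i := by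
    rw [quasiIsoAt_iff_isIso_homologyMap]
    let H := HomologicalComplex.homologyFunctor E c i
    have (j : J) : IsIso ((Functor.whiskerRight α H).app j) :=
      inferInstanceAs (IsIso (HomologicalComplex.homologyMap (α.app j) i))
    have : IsIso (Functor.whiskerRight α H) := NatIso.isIso_of_isIso_app _
    exact (NatIso.isIso_map_iff (preservesColimitNatIso (J := J) H) α).2
      (inferInstanceAs (IsIso (colim.map (Functor.whiskerRight α H))))

end Homology

lemma preservesColimitsOfShape_discrete_of_comp {C D E : Type*} [Category* C] [Category* D]
    [Category* E] {ι : Type*} [HasColimitsOfShape (Discrete ι) C] (L : C ⥤ D) [L.EssSurj]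
    (G : D ⥤ E) [PreservesColimitsOfShape (Discrete ι) L]
    [PreservesColimitsOfShape (Discrete ι) (L ⋙ G)] :
    PreservesColimitsOfShape (Discrete ι) G where
  preservesColimit {K} := by
    let F : Discrete ι ⥤ C := Discrete.functor fun i => L.objPreimage (K.obj ⟨i⟩)
    have : PreservesColimit (F ⋙ L) G :=
      preservesColimit_of_preserves_colimit_cocone
        (isColimitOfPreserves L (colimit.isColimit F))
        (isColimitOfPreserves (L ⋙ G) (colimit.isColimit F))
    exact preservesColimit_of_iso_diagram G
      (Discrete.natIso fun i => L.objObjPreimageIso (K.obj i) : F ⋙ L ≅ K)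

section Derived

open DerivedCategory

variable {C : Type u} [Category.{v} C] [Abelian C] [HasDerivedCategory.{w'} C] {ι : Type w}
  [HasColimitsOfShape (Discrete ι) C] [HasExactColimitsOfShape (Discrete ι) C]

lemma exists_desc_Q_obj_sigma (X : ι → CochainComplex C ℤ) {Y : DerivedCategory C}
    (g : ∀ i, Q.obj (X i) ⟶ Y) :
    ∃ φ : Q.obj (∐ X) ⟶ Y, ∀ i, Q.map (Sigma.ι X i) ≫ φ = g i := by
  let e : Q.obj (Q.objPreimage Y) ≅ Y := Q.objObjPreimageIso Y
  choose X' s hs u hu using fun i => right_fac (g i ≫ e.inv)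
  let t : ∐ X' ⟶ ∐ X := Limits.Sigma.map s
  have : QuasiIso t := quasiIso_colimMap _ fun ⟨i⟩ =>
    (isIso_Q_map_iff_quasiIso C (s i)).1 (hs i)
  have : IsIso (Q.map t) := (isIso_Q_map_iff_quasiIso C t).2 inferInstance
  refine ⟨inv (Q.map t) ≫ Q.map (Sigma.desc u) ≫ e.hom, fun i => ?_⟩
  have hι : Q.map (Sigma.ι X i) = inv (Q.map (s i)) ≫ Q.map (Sigma.ι X' i) ≫ Q.map t := by
    rw [IsIso.eq_inv_comp, ← Q.map_comp, ← Q.map_comp, Sigma.ι_map]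
  rw [hι, ← cancel_mono e.inv, hu]
  simp only [Category.assoc, IsIso.hom_inv_id_assoc, Iso.hom_inv_id, Category.comp_id]
  rw [← Q.map_comp, Sigma.ι_desc]

instance (n : ℤ) : PreservesColimitsOfShape (Discrete ι) (Q ⋙ homologyFunctor C n) :=
  preservesColimitsOfShape_of_natIso (homologyFunctorFactors C n).symm

lemma eq_zero_of_Q_map_ι_comp_eq_zero (X : ι → CochainComplex C ℤ) {Y : DerivedCategory C}
    (φ : Q.obj (∐ X) ⟶ Y) (hφ : ∀ i, Q.map (Sigma.ι X i) ≫ φ = 0) : φ = 0 := by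
  obtain ⟨F, p, q, hT⟩ := distinguished_cocone_triangle₁ φ
  have hpφ : p ≫ φ = 0 := comp_distTriang_mor_zero₁₂ _ hT
  have hlift (i : ι) : ∃ u : Q.obj (X i) ⟶ F, Q.map (Sigma.ι X i) = u ≫ p :=
    Triangle.coyoneda_exact₂ _ hT _ (hφ i)
  choose u hu using hlift
  obtain ⟨v, hv⟩ := exists_desc_Q_obj_sigma X u
  have : IsIso (v ≫ p) := by
    rw [isIso_iff]
    intro n
    suffices (homologyFunctor C n).map (v ≫ p) = 𝟙 _ by rw [this]; infer_instance
    refine Cofan.IsColimit.hom_ext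
      (isColimitCofanMkObjOfIsColimit (Q ⋙ homologyFunctor C n) X _ (coproductIsCoproduct X)) _ _
        fun i => ?_
    calc (homologyFunctor C n).map (Q.map (Sigma.ι X i)) ≫ (homologyFunctor C n).map (v ≫ p)
        = (homologyFunctor C n).map (Q.map (Sigma.ι X i)) := by
          rw [← Functor.map_comp, reassoc_of% hv i, ← hu i]
      _ = _ := (Category.comp_id _).symm
  rw [← cancel_epi (v ≫ p), Category.assoc, hpφ, comp_zero, comp_zero]

instance : PreservesColimitsOfShape (Discrete ι) (Q : CochainComplex C ℤ ⥤ _) := by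
  suffices ∀ X : ι → CochainComplex C ℤ, PreservesColimit (Discrete.functor X) Q from
    preservesColimitsOfShape_of_discrete _
  intro X
  refine preservesColimit_of_preserves_colimit_cocone (coproductIsCoproduct X) ?_
  refine (isColimitMapCoconeCofanMkEquiv _ _ _).symm ?_
  choose φ hφ using fun {Y} => exists_desc_Q_obj_sigma X (Y := Y)
  exact Cofan.IsColimit.mk _ (fun s => φ s.inj) (fun s i => hφ _ i) fun s m hm =>
    sub_eq_zero.1 (eq_zero_of_Q_map_ι_comp_eq_zero X _ fun i => by
      rw [Preadditive.comp_sub, hφ, sub_eq_zero]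
      exact hm i)

instance : HasColimitsOfShape (Discrete ι) (DerivedCategory C) where
  has_colimit K :=
    let F : Discrete ι ⥤ CochainComplex C ℤ := Discrete.functor fun i => Q.objPreimage (K.obj ⟨i⟩)
    have : HasColimit (F ⋙ Q) := ⟨_, isColimitOfPreserves Q (colimit.isColimit F)⟩
    hasColimit_of_iso
      (Discrete.natIso fun i => (Q.objObjPreimageIso (K.obj i)).symm : K ≅ F ⋙ Q)

instance (n : ℤ) : PreservesColimitsOfShape (Discrete ι) (homologyFunctor C n) :=
  preservesColimitsOfShape_discrete_of_comp Q _

lemma preservesColimitsOfShape_mapDerivedCategory {D : Type*} [Category* D] [Abelian D]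
    [HasDerivedCategory D] [HasColimitsOfShape (Discrete ι) D]
    [HasExactColimitsOfShape (Discrete ι) D] (F : C ⥤ D) [F.Additive] [PreservesFiniteLimits F]
    [PreservesFiniteColimits F] [PreservesColimitsOfShape (Discrete ι) F] :
    PreservesColimitsOfShape (Discrete ι) F.mapDerivedCategory :=
  have : PreservesColimitsOfShape (Discrete ι) (F.mapHomologicalComplex (ComplexShape.up ℤ)) :=
    HomologicalComplex.preservesColimitsOfShape_of_eval _ fun i =>
      inferInstanceAs (PreservesColimitsOfShape (Discrete ι) (HomologicalComplex.eval C _ i ⋙ F))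
  have := preservesColimitsOfShape_of_natIso (J := Discrete ι) F.mapDerivedCategoryFactors.symm
  preservesColimitsOfShape_discrete_of_comp Q _

end Derived

lemma opCoproductIsoProduct_hom_comp_map {C : Type*} [Category* C] {ι : Type*} {X Y : ι → C}
    [HasCoproduct X] [HasCoproduct Y] (f : ∀ i, X i ⟶ Y i) :
    (opCoproductIsoProduct Y).hom ≫ Limits.Pi.map (fun i => (f i).op) =
      (Limits.Sigma.map f).op ≫ (opCoproductIsoProduct X).hom :=
  Pi.hom_ext _ _ fun i => by simp [← op_comp]

section Telescope

variable {C : Type*} [Category* C] [Preadditive C] {X Y : ℕ → C} [HasCoproduct X] [HasCoproduct Y]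

/-- The map `⨁ₙ Xₙ ⟶ ⨁ₙ Xₙ` whose cone is the homotopy colimit of the sequence `s`: the identity
minus the transition maps. -/
noncomputable def telescopeMap (s : ∀ n, X n ⟶ X (n + 1)) : ∐ X ⟶ ∐ X :=
  𝟙 _ - Sigma.map' (· + 1) s

@[simp]
lemma ι_telescopeMap (s : ∀ n, X n ⟶ X (n + 1)) (n : ℕ) :
    Sigma.ι X n ≫ telescopeMap s = Sigma.ι X n - s n ≫ Sigma.ι X (n + 1) := by
  simp [telescopeMap]

lemma telescopeMap_naturality {s : ∀ n, X n ⟶ X (n + 1)} {t : ∀ n, Y n ⟶ Y (n + 1)}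
    (α : ∀ n, X n ⟶ Y n) (hα : ∀ n, s n ≫ α (n + 1) = α n ≫ t n) :
    telescopeMap s ≫ Limits.Sigma.map α = Limits.Sigma.map α ≫ telescopeMap t :=
  Sigma.hom_ext _ _ fun n => by
    simp [reassoc_of% ι_telescopeMap s, Preadditive.comp_sub, Preadditive.sub_comp,
      reassoc_of% hα n]

/-- The retraction `ιₙ ↦ -∑_{k < n} ιₖ` of the telescope map of a constant sequence. -/
noncomputable def telescopeRetraction (x : C) [HasCoproduct fun _ : ℕ => x] :
    ∐ (fun _ : ℕ => x) ⟶ ∐ fun _ : ℕ => x :=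
  Sigma.desc fun n => -∑ k ∈ Finset.range n, Sigma.ι (fun _ : ℕ => x) k

lemma telescopeMap_comp_retraction (x : C) [HasCoproduct fun _ : ℕ => x] :
    telescopeMap (fun _ : ℕ => 𝟙 x) ≫ telescopeRetraction x = 𝟙 _ :=
  Sigma.hom_ext _ _ fun n => by
    simp [reassoc_of% ι_telescopeMap fun _ : ℕ => 𝟙 x, telescopeRetraction, Preadditive.sub_comp,
      Finset.sum_range_succ]

lemma telescopeRetraction_comp_map (x : C) [HasCoproduct fun _ : ℕ => x] :
    telescopeRetraction x ≫ telescopeMap (fun _ : ℕ => 𝟙 x) =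
      𝟙 _ - Sigma.desc (fun _ => 𝟙 x) ≫ Sigma.ι (fun _ : ℕ => x) 0 :=
  Sigma.hom_ext _ _ fun n => by
    simpa [telescopeRetraction, Preadditive.comp_sub, Preadditive.sum_comp] using
      Finset.sum_range_sub (fun k => Sigma.ι (fun _ : ℕ => x) k) n

/-- A countable coproduct of copies of `x` as the biproduct of `x`, its zeroth copy, and of itself,
embedded by the telescope map of the constant sequence. -/
@[simps]
noncomputable def telescopeBicone (x : C) [HasCoproduct fun _ : ℕ => x] :
    BinaryBicone x (∐ fun _ : ℕ => x) where
  pt := ∐ fun _ : ℕ => x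
  fst := Sigma.desc fun _ => 𝟙 x
  snd := telescopeRetraction x
  inl := Sigma.ι (fun _ : ℕ => x) 0
  inr := telescopeMap fun _ => 𝟙 x
  inl_snd := by simp [telescopeRetraction]
  inr_fst := Sigma.hom_ext _ _ fun n => by
    simp [reassoc_of% ι_telescopeMap fun _ : ℕ => 𝟙 x, Preadditive.sub_comp]
  inr_snd := telescopeMap_comp_retraction x

lemma telescopeBicone_total (x : C) [HasCoproduct fun _ : ℕ => x] :
    (telescopeBicone x).fst ≫ (telescopeBicone x).inl +
      (telescopeBicone x).snd ≫ (telescopeBicone x).inr = 𝟙 _ :=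
  add_comm _ _ |>.trans (eq_sub_iff_add_eq.1 (telescopeRetraction_comp_map x))

end Telescope

section Triangulated

variable {T : Type u} [Category.{v} T] [Preadditive T] [HasZeroObject T]
  [HasShift T ℤ] [∀ n : ℤ, (shiftFunctor T n).Additive] [Pretriangulated T]

lemma mk_inl_snd_zero_mem_distTriang {x y : T} {b : BinaryBicone x y} (hb : b.IsBilimit) :
    Triangle.mk b.inl b.snd 0 ∈ distTriang T :=
  isomorphic_distinguished _ (binaryBiproductTriangle_distinguished x y) _
    (Triangle.isoMk _ _ (Iso.refl _) (biprod.uniqueUpToIso x y hb) (Iso.refl _)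
      (show b.inl ≫ biprod.lift b.fst b.snd = 𝟙 x ≫ biprod.inl by ext <;> simp)
      (show b.snd ≫ 𝟙 y = biprod.lift b.fst b.snd ≫ biprod.snd by simp)
      (zero_comp.trans comp_zero.symm))

variable {P : ObjectProperty T} [P.IsTriangulated]

open Pretriangulated.Opposite in
instance isStableUnderCoproductsOfShape_trW (ι : Type*) [HasCoproductsOfShape ι T]
    [P.IsClosedUnderColimitsOfShape (Discrete ι)] :
    P.trW.IsStableUnderCoproductsOfShape ι := by
  have : P.op.IsClosedUnderLimitsOfShape (Discrete ι) := .of_equivalence (Discrete.opposite ι)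
  refine .mk _ _ fun X Y _ _ f hf => ObjectProperty.trW_of_op _ ?_
  have hf' (i : ι) : P.op.trW (f i).op := by rw [ObjectProperty.trW_op]; exact hf i
  choose Z g h hT hZ using hf'
  exact (P.op.trW.arrow_mk_iso_iff (Arrow.isoMk (opCoproductIsoProduct Y)
    (opCoproductIsoProduct X) (opCoproductIsoProduct_hom_comp_map f))).2
      (.mk P.op (productTriangle_distinguished _ hT) (P.op.prop_pi _ hZ))

instance hasTwoOutOfThree_trW [P.IsClosedUnderIsomorphisms] [IsTriangulated T] :
    P.trW.HasTwoOutOfThreeProperty where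
  of_postcomp f g hg hfg := by
    obtain ⟨A, _, _, hA⟩ := distinguished_cocone_triangle f
    obtain ⟨B, _, _, hB⟩ := distinguished_cocone_triangle g
    obtain ⟨C, _, _, hC⟩ := distinguished_cocone_triangle (f ≫ g)
    have : P A := P.ext_of_isTriangulatedClosed₁ _ (Triangulated.someOctahedron rfl hA hB hC).mem
      ((P.trW_iff_of_distinguished _ hC).1 hfg) ((P.trW_iff_of_distinguished _ hB).1 hg)
    exact .mk _ hA this
  of_precomp f g hf hfg := by
    obtain ⟨A, _, _, hA⟩ := distinguished_cocone_triangle f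
    obtain ⟨B, _, _, hB⟩ := distinguished_cocone_triangle g
    obtain ⟨C, _, _, hC⟩ := distinguished_cocone_triangle (f ≫ g)
    have : P B := P.ext_of_isTriangulatedClosed₃ _ (Triangulated.someOctahedron rfl hA hB hC).mem
      ((P.trW_iff_of_distinguished _ hA).1 hf) ((P.trW_iff_of_distinguished _ hC).1 hfg)
    exact .mk _ hB this

lemma prop_zero_of_isIso_telescopeMap [IsTriangulated T] [P.IsClosedUnderIsomorphisms]
    [HasCoproductsOfShape ℕ T] [P.IsClosedUnderColimitsOfShape (Discrete ℕ)] {X : ℕ → T}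
    (s : ∀ n, X n ⟶ X (n + 1)) (hs : ∀ n, P.trW (s n)) [IsIso (telescopeMap s)] : P (X 0) := by
  let α (n : ℕ) : X 0 ⟶ X n := n.rec (𝟙 _) fun k φ => φ ≫ s k
  have hα (n : ℕ) : P.trW (α n) := by
    induction n with
    | zero => exact P.trW.id_mem _
    | succ n ih => exact P.trW.comp_mem _ _ ih (hs n)
  have hα' : P.trW (Limits.Sigma.map α) := MorphismProperty.colimMap _ fun n => hα n.as
  have h₁ : P.trW (telescopeMap (fun _ : ℕ => 𝟙 (X 0)) ≫ Limits.Sigma.map α) := by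
    rw [telescopeMap_naturality α (t := s) fun n => Category.id_comp _]
    exact P.trW.comp_mem _ _ hα' (P.trW_of_isIso _)
  have h₂ : P.trW (telescopeBicone (X 0)).inr := P.trW.of_postcomp _ _ hα' h₁
  have h₃ : P.trW (telescopeBicone (X 0)).snd := P.trW.of_precomp _ _ h₂ <| by
    rw [BinaryBicone.inr_snd]
    exact P.trW.id_mem _
  exact (P.trW_iff_of_distinguished' _
    (mk_inl_snd_zero_mem_distTriang (isBinaryBilimitOfTotal _ (telescopeBicone_total _)))).1 h₃

end Triangulated

section Generation

section

open HomologicalComplex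

variable {C : Type*} [Category* C] [Abelian C] {ι : Type*} [DecidableEq ι] {c : ComplexShape ι}
  {K : HomologicalComplex C c} {n : ι} {A : C}

/-- The morphism from a single complex which classifies a cycle. -/
noncomputable def mkHomFromSingleOfCycle (z : A ⟶ K.cycles n) : (single C c n).obj A ⟶ K :=
  mkHomFromSingle (z ≫ K.iCycles n) fun _ _ => by simp

lemma comp_homologyπ_eq_comp_homologyMap (z : A ⟶ K.cycles n) :
    z ≫ K.homologyπ n = (singleObjHomologySelfIso c n A).inv ≫
      homologyMap (mkHomFromSingleOfCycle z) n := by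
  have hz : (singleObjCyclesSelfIso c n A).inv ≫ cyclesMap (mkHomFromSingleOfCycle z) n = z := by
    rw [← cancel_mono (K.iCycles n), Category.assoc, cyclesMap_i,
      singleObjCyclesSelfIso_inv_iCycles_assoc]
    simp [mkHomFromSingleOfCycle]
  rw [← singleObjCyclesSelfIso_inv_homologyπ, Category.assoc, homologyπ_naturality, reassoc_of% hz]

end

open DerivedCategory
open HomologicalComplex (homologyMap single)

variable {C : Type u} [Category.{v} C] [Abelian C] [HasDerivedCategory.{w'} C]

lemma homologyFunctor_map_eq_zero {G : C} (hG : IsSeparator G) {K : CochainComplex C ℤ}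
    {Y : DerivedCategory C} (φ : Q.obj K ⟶ Y) (n : ℤ)
    (hφ : ∀ z : G ⟶ K.cycles n, Q.map (mkHomFromSingleOfCycle z) ≫ φ = 0) :
    (homologyFunctor C n).map φ = 0 := by
  let τ (L : CochainComplex C ℤ) : L.homology n ≅ (homologyFunctor C n).obj (Q.obj L) :=
    (homologyFunctorFactors C n).symm.app L
  have hτ (z : G ⟶ K.cycles n) : homologyMap (mkHomFromSingleOfCycle z) n ≫ (τ K).hom =
      (τ _).hom ≫ (homologyFunctor C n).map (Q.map (mkHomFromSingleOfCycle z)) :=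
    (homologyFunctorFactors C n).inv.naturality _
  rw [← cancel_epi (K.homologyπ n ≫ (τ K).hom), comp_zero]
  refine hG.def _ _ fun z => ?_
  simp only [Category.assoc, comp_zero]
  rw [← Category.assoc, comp_homologyπ_eq_comp_homologyMap, Category.assoc, reassoc_of% hτ,
    ← Functor.map_comp, hφ, Functor.map_zero, comp_zero, comp_zero]

lemma isIso_telescopeMap [HasColimitsOfShape (Discrete ℕ) C]
    [HasExactColimitsOfShape (Discrete ℕ) C] {X : ℕ → DerivedCategory C}
    (s : ∀ k, X k ⟶ X (k + 1)) (hs : ∀ k n, (homologyFunctor C n).map (s k) = 0) :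
    IsIso (telescopeMap s) := by
  rw [isIso_iff]
  intro n
  have hι (k : ℕ) : (homologyFunctor C n).map (Sigma.ι X k) ≫
      (homologyFunctor C n).map (telescopeMap s) = (homologyFunctor C n).map (Sigma.ι X k) := by
    rw [← Functor.map_comp, ι_telescopeMap, Functor.map_sub, Functor.map_comp, hs, zero_comp,
      sub_zero]
  suffices (homologyFunctor C n).map (telescopeMap s) = 𝟙 _ by rw [this]; infer_instance
  exact Cofan.IsColimit.hom_ext
    (isColimitCofanMkObjOfIsColimit (homologyFunctor C n) X _ (coproductIsCoproduct X)) _ _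
      fun k => (hι k).trans (Category.comp_id _).symm

variable [HasCoproducts.{v} C] [AB4 C] {P : ObjectProperty (DerivedCategory C)} [P.IsTriangulated]
  [P.IsClosedUnderIsomorphisms] [∀ ι : Type v, P.IsClosedUnderColimitsOfShape (Discrete ι)]

lemma exists_trW_homologyFunctor_map_eq_zero {G : C} (hG : IsSeparator G)
    (hP : P ((singleFunctor C 0).obj G)) (x : DerivedCategory C) :
    ∃ (y : DerivedCategory C) (s : x ⟶ y),
      P.trW s ∧ ∀ n, (homologyFunctor C n).map s = 0 := by
  let e : Q.obj (Q.objPreimage x) ≅ x := Q.objObjPreimageIso x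
  let I : Type v := Σ n : ℤ, G ⟶ (Q.objPreimage x).cycles n
  let p : ∐ (fun i : I => Q.obj ((single C (.up ℤ) i.1).obj G)) ⟶ x :=
    Sigma.desc fun i => Q.map (mkHomFromSingleOfCycle i.2) ≫ e.hom
  have hI (i : I) : P (Q.obj ((single C (.up ℤ) i.1).obj G)) :=
    P.prop_of_iso (((singleFunctors C).shiftIso (-i.1) i.1 0 (by simp)).app G)
      (P.le_shift _ _ hP)
  obtain ⟨y, s, h, hT⟩ := distinguished_cocone_triangle p
  refine ⟨y, s, .mk' _ hT (P.prop_colimit _ fun i => hI i.as), fun n => ?_⟩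
  suffices (homologyFunctor C n).map (e.hom ≫ s) = 0 by
    rwa [← cancel_epi ((homologyFunctor C n).map e.hom), comp_zero, ← Functor.map_comp]
  refine homologyFunctor_map_eq_zero hG _ n fun z => ?_
  have hz : Sigma.ι (fun i : I => Q.obj ((single C (.up ℤ) i.1).obj G)) ⟨n, z⟩ ≫ p =
      Q.map (mkHomFromSingleOfCycle z) ≫ e.hom :=
    Sigma.ι_desc _ _
  have hps : p ≫ s = 0 := comp_distTriang_mor_zero₁₂ _ hT
  rw [← Category.assoc, ← hz, Category.assoc, hps, comp_zero]

theorem prop_of_isSeparator {G : C} (hG : IsSeparator G) (hP : P ((singleFunctor C 0).obj G))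
    (x : DerivedCategory C) : P x := by
  choose next step hstep hstep' using exists_trW_homologyFunctor_map_eq_zero (P := P) hG hP
  let X (n : ℕ) : DerivedCategory C := n.rec x fun _ => next
  let s (n : ℕ) : X n ⟶ X (n + 1) := step (X n)
  have : P.IsClosedUnderColimitsOfShape (Discrete ℕ) :=
    .of_equivalence (Discrete.equivalence (Equiv.ulift.{v}))
  have : HasCoproducts.{0} C := hasCoproducts_shrink.{0, v}
  have : IsIso (telescopeMap s) := isIso_telescopeMap s fun n => hstep' (X n)
  exact prop_zero_of_isIso_telescopeMap s fun n => hstep (X n)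

end Generation

instance {C : Type*} [Category* C] [HasZeroMorphisms C] (P : ObjectProperty C) (J : Type*)
    [Category* J] : P.leftOrthogonal.IsClosedUnderColimitsOfShape J where
  colimitsOfShape_le := by
    rintro X ⟨d⟩ Y f hY
    exact d.isColimit.hom_ext fun j => (d.prop_diag_obj j _ hY).trans comp_zero.symm

section Localizing

variable {T : Type u} [Category.{v} T] [Preadditive T] [HasZeroObject T]
  [HasShift T ℤ] [∀ n : ℤ, (shiftFunctor T n).Additive] [Pretriangulated T]

lemma isLocalizingSub_setOf (P : ObjectProperty T) [P.IsTriangulated] [P.IsClosedUnderIsomorphisms]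
    [∀ ι : Type w, P.IsClosedUnderColimitsOfShape (Discrete ι)] :
    IsLocalizingSub.{w} {x | P x} where
  zero_mem := P.prop_zero
  mem_of_iso := P.prop_of_iso
  shift_mem n _ := P.le_shift n _
  cone_mem := P.ext_of_isTriangulatedClosed₃
  coprod_mem _ _ hc hf := P.prop_of_isColimit hc fun i => hf i.as

lemma isLocalizingSub_Loc (S : Set T) : IsLocalizingSub.{w} (Loc.{w} S) where
  zero_mem _ hL := hL.1.zero_mem
  mem_of_iso e hx _ hL := hL.1.mem_of_iso e (hx _ hL)
  shift_mem n _ hx _ hL := hL.1.shift_mem n (hx _ hL)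
  cone_mem Tr hTr h₁ h₂ _ hL := hL.1.cone_mem Tr hTr (h₁ _ hL) (h₂ _ hL)
  coprod_mem f c hc hf _ hL := hL.1.coprod_mem f c hc fun i => hf i _ hL

/-- Membership in `Loc S`, as an object property: this gives access to the notions which Mathlib
attaches to such properties (`trW`, `rightOrthogonal`, ...). -/
def locProperty (S : Set T) : ObjectProperty T := (· ∈ Loc.{w} S)

namespace locProperty

variable (S : Set T)

instance : (locProperty.{w} S).IsClosedUnderIsomorphisms where
  of_iso := (isLocalizingSub_Loc S).mem_of_iso

instance : (locProperty.{w} S).IsTriangulated :=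
  have : (locProperty.{w} S).IsStableUnderShift ℤ :=
    ⟨fun n => ⟨fun _ => (isLocalizingSub_Loc S).shift_mem n⟩⟩
  have : (locProperty.{w} S).IsTriangulatedClosed₃ := .mk' (isLocalizingSub_Loc S).cone_mem
  { exists_zero := ⟨0, isZero_zero T, (isLocalizingSub_Loc S).zero_mem⟩
    toIsTriangulatedClosed₂ := .of_isTriangulatedClosed₃ }

instance (ι : Type w) : (locProperty.{w} S).IsClosedUnderColimitsOfShape (Discrete ι) where
  colimitsOfShape_le := by
    rintro X ⟨d⟩
    let e := Discrete.natIsoFunctor (F := d.diag)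
    exact (isLocalizingSub_Loc S).coprod_mem _ _
      ((IsColimit.precomposeInvEquiv e _).symm d.isColimit) fun i => d.prop_diag_obj ⟨i⟩

end locProperty

lemma locProperty_of_mem {S : Set T} {x : T} (hx : x ∈ S) : locProperty.{w} S x :=
  fun _ hL => hL.2 hx

lemma prop_of_mem_Loc {S : Set T} {P : ObjectProperty T} [P.IsTriangulated]
    [P.IsClosedUnderIsomorphisms] [∀ ι : Type w, P.IsClosedUnderColimitsOfShape (Discrete ι)]
    (hS : ∀ x ∈ S, P x) {x : T} (hx : x ∈ Loc.{w} S) : P x :=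
  hx _ ⟨isLocalizingSub_setOf P, hS⟩

lemma rightOrth_Loc (S : Set T) :
    rightOrth (Loc.{w} S) = {x | (locProperty.{w} S).rightOrthogonal x} :=
  Set.ext fun _ => forall_congr' fun _ => forall_comm

end Localizing

section Linear

variable {T : Type*} [Category* T] [Preadditive T] {R : Type*} [CommRing R] [Linear R T]

/-- The objects on which `r` acts invertibly. -/
def smulIsIso (r : R) : ObjectProperty T := fun x => IsIso (r • 𝟙 x)

/-- The objects annihilated by `r`. -/
def smulEqZero (r : R) : ObjectProperty T := fun x => r • 𝟙 x = 0

variable (r : R)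

instance (J : Type*) [Category* J] : (smulIsIso (T := T) r).IsClosedUnderColimitsOfShape J where
  colimitsOfShape_le := by
    rintro X ⟨d⟩
    let α : d.diag ⟶ d.diag := r • 𝟙 d.diag
    have (j : J) : IsIso (α.app j) := d.prop_diag_obj j
    have : IsIso α := NatIso.isIso_of_isIso_app _
    have hα : r • 𝟙 X = d.isColimit.map d.cocone α := d.isColimit.hom_ext fun j => by
      rw [IsColimit.ι_map]
      simp [α]
    rw [smulIsIso, hα]
    exact (IsColimit.coconePointsIsoOfNatIso d.isColimit d.isColimit (asIso α)).isIso_hom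

instance : (smulIsIso (T := T) r).IsClosedUnderIsomorphisms where
  of_iso {x y} e (hx : IsIso _) := by
    have : r • 𝟙 y = e.inv ≫ (r • 𝟙 x) ≫ e.hom := by simp
    rw [smulIsIso, this]
    infer_instance

variable {r}

lemma smulEqZero.leftOrthogonal_smulIsIso {c : T} (hc : smulEqZero r c) :
    (smulIsIso (T := T) r).leftOrthogonal c := fun x φ (hx : IsIso (r • 𝟙 x)) => by
  have hc : r • 𝟙 c = 0 := hc
  have : φ ≫ (r • 𝟙 x) = (r • 𝟙 c) ≫ φ := by simp
  rw [← cancel_mono (r • 𝟙 x), this, hc, zero_comp, zero_comp]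

section

variable {T' : Type*} [Category* T'] [Preadditive T'] [Linear R T'] (F : T ⥤ T') [F.Linear R]
  {x : T}

lemma smulIsIso.map (hx : smulIsIso r x) : smulIsIso r (F.obj x) := by
  have : IsIso (r • 𝟙 x) := hx
  rw [smulIsIso, ← F.map_id, ← F.map_smul]
  infer_instance

lemma smulEqZero.map [F.PreservesZeroMorphisms] (hx : smulEqZero r x) :
    smulEqZero r (F.obj x) := by
  have hx : r • 𝟙 x = 0 := hx
  rw [smulEqZero, ← F.map_id, ← F.map_smul, hx, F.map_zero]

end

lemma smulEqZero_kernel (x : T) [HasKernel (r • 𝟙 x)] : smulEqZero r (kernel (r • 𝟙 x)) := by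
  rw [smulEqZero, ← cancel_mono (kernel.ι _)]
  simpa using kernel.condition (r • 𝟙 x)

lemma smulEqZero_cokernel (x : T) [HasCokernel (r • 𝟙 x)] : smulEqZero r (cokernel (r • 𝟙 x)) := by
  rw [smulEqZero, ← cancel_epi (cokernel.π _)]
  simpa only [Linear.smul_comp, Linear.comp_smul, Category.id_comp, Category.comp_id, comp_zero]
    using cokernel.condition (r • 𝟙 x)

variable [HasShift T ℤ] [∀ n : ℤ, (shiftFunctor T n).Additive]

section

variable [∀ n : ℤ, (shiftFunctor T n).Linear R]

instance : (smulEqZero (T := T) r).IsStableUnderShift ℤ where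
  isStableUnderShiftBy n := ⟨fun _ hx => hx.map (shiftFunctor T n)⟩

instance : (smulIsIso (T := T) r).IsStableUnderShift ℤ where
  isStableUnderShiftBy n := ⟨fun _ hx => hx.map (shiftFunctor T n)⟩

end

variable [HasZeroObject T] [Pretriangulated T] {P : ObjectProperty T} [P.IsTriangulated]

lemma leftOrthogonal_of_trW_smul {c : T} (hc : P.trW (r • 𝟙 c)) (n : ℕ) :
    (P.rightOrthogonal ⊓ smulEqZero (r ^ n)).leftOrthogonal c := by
  rintro z u ⟨hz, hrz : r ^ n • 𝟙 z = 0⟩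
  rw [← P.isLocal_trW] at hz
  have eq_zero_of_smul (v : c ⟶ z) (hv : r • v = 0) : v = 0 :=
    (hz _ hc).1 (by simpa using hv)
  have eq_zero_of_pow_smul (k : ℕ) : r ^ k • u = 0 → u = 0 := by
    induction k with
    | zero => simp
    | succ k ih => exact fun h => ih (eq_zero_of_smul _ (by rwa [← mul_smul, ← pow_succ']))
  exact eq_zero_of_pow_smul n (by simpa using u ≫= hrz)

variable [∀ n : ℤ, (shiftFunctor T n).Linear R]

instance : (smulIsIso (T := T) r).IsTriangulated where
  exists_zero := ⟨0, isZero_zero T, 0, (isZero_zero T).eq_of_src _ _, (isZero_zero T).eq_of_src _ _⟩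
  toIsTriangulatedClosed₂ := .mk' fun X hX h₁ h₃ =>
    isIso₂_of_isIso₁₃ (Triangle.homMk X X (r • 𝟙 _) (r • 𝟙 _) (r • 𝟙 _) (by simp) (by simp)
      (by rw [Functor.map_smul, (shiftFunctor T (1 : ℤ)).map_id]; simp)) hX hX h₁ h₃

lemma smulEqZero_sq_obj₃ {x z : T} {g : x ⟶ z} {h : z ⟶ x⟦(1 : ℤ)⟧}
    (hT : Triangle.mk (r • 𝟙 x) g h ∈ distTriang T) : smulEqZero (r ^ 2) z := by
  have hg : (r • 𝟙 x) ≫ g = 0 := comp_distTriang_mor_zero₁₂ _ hT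
  have hh : h ≫ (r • 𝟙 x)⟦(1 : ℤ)⟧' = 0 := comp_distTriang_mor_zero₃₁ _ hT
  rw [Functor.map_smul, (shiftFunctor T (1 : ℤ)).map_id, Linear.comp_smul, Category.comp_id] at hh
  obtain ⟨v, hv⟩ : ∃ v : z ⟶ x, r • 𝟙 z = v ≫ g :=
    Triangle.coyoneda_exact₃ _ hT _ (show (r • 𝟙 z) ≫ h = 0 by simpa using hh)
  calc r ^ 2 • 𝟙 z = v ≫ (r • 𝟙 x) ≫ g := by rw [sq, mul_smul, hv]; simp
    _ = 0 := by rw [hg, comp_zero]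

lemma smulIsIso_of_rightOrthogonal {x : T} (hx : P.rightOrthogonal x)
    (hP : ∀ y, (P.rightOrthogonal ⊓ smulEqZero (r ^ 2)).leftOrthogonal y) : smulIsIso r x := by
  obtain ⟨z, g, h, hT⟩ := distinguished_cocone_triangle (r • 𝟙 x)
  refine (Triangle.isZero₃_iff_isIso₁ _ hT).1 ((IsZero.iff_id_eq_zero _).2 ?_)
  exact hP z (𝟙 z) ⟨P.rightOrthogonal.ext_of_isTriangulatedClosed₃ _ hT hx hx,
    smulEqZero_sq_obj₃ hT⟩

end Linear

section Exact

open DerivedCategory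

variable {D : Type*} [Category.{v} D] [Abelian D] [HasDerivedCategory D]
  {P : ObjectProperty (DerivedCategory D)} [P.IsTriangulated] [P.IsClosedUnderIsomorphisms]

lemma trW_singleFunctor_map {M N : D} (φ : M ⟶ N) (hk : P ((singleFunctor D 0).obj (kernel φ)))
    (hc : P ((singleFunctor D 0).obj (cokernel φ))) : P.trW ((singleFunctor D 0).map φ) := by
  have hπ : P.trW ((singleFunctor D 0).map (Abelian.coimage.π φ)) :=
    have h : (ShortComplex.mk _ _ (cokernel.condition (kernel.ι φ))).ShortExact :=
      { exact := ShortComplex.exact_cokernel _ }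
    .mk' P h.singleTriangle_distinguished hk
  have hι : P.trW ((singleFunctor D 0).map (Abelian.image.ι φ)) :=
    have h : (ShortComplex.mk _ _ (kernel.condition (cokernel.π φ))).ShortExact :=
      { exact := ShortComplex.exact_kernel _ }
    .mk P h.singleTriangle_distinguished hc
  rw [← Abelian.coimage_image_factorisation φ, Functor.map_comp, Functor.map_comp]
  exact P.trW.comp_mem _ _ hπ (P.trW.comp_mem _ _ (P.trW_of_isIso _) hι)

variable {C : Type u} [Category.{v} C] [Abelian C] [HasCoproducts.{v} C] [AB4 C]
  [HasCoproducts.{v} D] [AB4 D]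
  [∀ ι : Type v, P.IsClosedUnderColimitsOfShape (Discrete ι)]
  (F : C ⥤ D) [F.Additive] [PreservesFiniteLimits F] [PreservesFiniteColimits F]
  [∀ ι : Type v, PreservesColimitsOfShape (Discrete ι) F] {G : C}

lemma prop_Q_obj_mapHomologicalComplex (hG : IsSeparator G)
    (hP : P ((singleFunctor D 0).obj (F.obj G))) (K : CochainComplex C ℤ) :
    P (Q.obj ((F.mapHomologicalComplex (.up ℤ)).obj K)) := by
  let _ := HasDerivedCategory.standard C
  have (ι : Type v) := preservesColimitsOfShape_mapDerivedCategory (ι := ι) F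
  refine P.prop_of_iso (F.mapDerivedCategoryFactors.app K) ?_
  refine prop_of_isSeparator (P := P.inverseImage F.mapDerivedCategory) hG ?_ (Q.obj K)
  exact P.prop_of_iso ((F.mapDerivedCategorySingleFunctor 0).app G).symm hP

lemma prop_singleFunctor_obj_map (hG : IsSeparator G)
    (hP : P ((singleFunctor D 0).obj (F.obj G))) (N : C) :
    P ((singleFunctor D 0).obj (F.obj N)) :=
  P.prop_of_iso (Q.mapIso ((HomologicalComplex.singleMapHomologicalComplex F (.up ℤ) 0).app N))
    (prop_Q_obj_mapHomologicalComplex F hG hP _)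

end Exact

section Module

open DerivedCategory

lemma bijective_of_isLocalizedModule {R M M' : Type*} [CommRing R] (S : Submonoid R)
    [AddCommGroup M] [Module R M] [AddCommGroup M'] [Module R M'] (g : M →ₗ[R] M')
    [IsLocalizedModule S g] (hM : ∀ s : S, IsUnit (algebraMap R (Module.End R M) s)) :
    Function.Bijective g := by
  have : IsLocalizedModule S (LinearMap.id : M →ₗ[R] M) :=
    ⟨hM, fun y => ⟨(y, 1), by simp⟩, fun h => ⟨1, by simpa using h⟩⟩
  have hg : IsLocalizedModule.linearEquiv S (LinearMap.id : M →ₗ[R] M) g = g :=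
    LinearMap.ext (IsLocalizedModule.linearEquiv_apply S (LinearMap.id : M →ₗ[R] M) g)
  rw [← hg]
  exact LinearEquiv.bijective _

variable {R : Type u} [CommRing R] {r : R}

lemma smulIsIso_iff_isUnit {M : ModuleCat.{v} R} :
    smulIsIso r M ↔ IsUnit (algebraMap R (Module.End R M) r) :=
  (ConcreteCategory.isIso_iff_bijective (r • 𝟙 M)).trans (Module.End.isUnit_iff _).symm

lemma smulIsIso_of_isUnit_algebraMap {A : Type v} [CommRing A] [Algebra R A]
    (hr : IsUnit (algebraMap R A r)) : smulIsIso r (ModuleCat.of R A) := by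
  refine (ConcreteCategory.isIso_iff_bijective _).2 ?_
  change Function.Bijective fun y : A => r • y
  simpa only [Algebra.smul_def] using IsUnit.isUnit_iff_mulLeft_bijective.1 hr

lemma smulEqZero_iff_isTorsionBy {M : ModuleCat.{v} R} :
    smulEqZero r M ↔ Module.IsTorsionBy R M r :=
  ModuleCat.hom_ext_iff.trans LinearMap.ext_iff

lemma smulEqZero_quotient (r : R) : smulEqZero r (ModuleCat.of R (R ⧸ Ideal.span {r})) :=
  smulEqZero_iff_isTorsionBy.2 <| (Module.isTorsionBy_quotient_iff _ _).2 fun x =>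
    Ideal.mul_mem_right x _ (Ideal.mem_span_singleton_self r)

/-- A module over an `R`-algebra `B`, restricted to `R` along `R → B`, is the same module with the
given compatible `R`-action. -/
noncomputable def restrictScalarsIsoOf (R : Type u) [CommRing R] (B N : Type u) [CommRing B]
    [Algebra R B] [AddCommGroup N] [Module R N] [Module B N] [IsScalarTower R B N] :
    (ModuleCat.restrictScalars.{u} (algebraMap R B)).obj (ModuleCat.of B N) ≅ ModuleCat.of R N :=
  (show (ModuleCat.restrictScalars.{u} (algebraMap R B)).obj (ModuleCat.of B N) ≃ₗ[R] N from
    { AddEquiv.refl N with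
      map_smul' := fun r x => algebraMap_smul (M := N) B r x }).toModuleIso

lemma isSeparator_of_self (B : Type u) [Ring B] : IsSeparator (ModuleCat.of B B) :=
  (isSeparator_def _).2 fun X _ _ _ h => by
    ext x
    simpa using congr($(h (ModuleCat.ofHom (LinearMap.toSpanSingleton B X x))) 1)

section Derived

variable [HasDerivedCategory.{w'} (ModuleCat.{u} R)]
  {P : ObjectProperty (DerivedCategory (ModuleCat.{u} R))} [P.IsTriangulated]
  [P.IsClosedUnderIsomorphisms] [∀ ι : Type u, P.IsClosedUnderColimitsOfShape (Discrete ι)]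

lemma prop_Q_obj_restrictScalars {B : Type u} [CommRing B] [Algebra R B]
    (hP : P (smod R (ModuleCat.of R B))) (K : CochainComplex (ModuleCat.{u} B) ℤ) :
    P (Q.obj (((ModuleCat.restrictScalars.{u} (algebraMap R B)).mapHomologicalComplex
      (.up ℤ)).obj K)) :=
  prop_Q_obj_mapHomologicalComplex _ (isSeparator_of_self B)
    (P.prop_of_iso ((singleFunctor _ 0).mapIso (restrictScalarsIsoOf R B B).symm) hP) K

lemma prop_smod_of_isScalarTower {B N : Type u} [CommRing B] [Algebra R B] [AddCommGroup N]
    [Module R N] [Module B N] [IsScalarTower R B N] (hP : P (smod R (ModuleCat.of R B))) :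
    P (smod R (ModuleCat.of R N)) :=
  P.prop_of_iso ((singleFunctor _ 0).mapIso (restrictScalarsIsoOf R B N))
    (prop_singleFunctor_obj_map _ (isSeparator_of_self B)
      (P.prop_of_iso ((singleFunctor _ 0).mapIso (restrictScalarsIsoOf R B B).symm) hP) _)

lemma prop_smod_of_smulEqZero (hP : P (smod R (ModuleCat.of R (R ⧸ Ideal.span {r}))))
    {M : ModuleCat.{u} R} (hM : smulEqZero r M) : P (smod R M) :=
  have hM := smulEqZero_iff_isTorsionBy.1 hM
  let _ := hM.module
  have : IsScalarTower R (R ⧸ Ideal.span {r}) M :=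
    Module.IsTorsionBySet.isScalarTower ((Module.isTorsionBySet_span_singleton_iff r).2 hM)
  prop_smod_of_isScalarTower (N := M) hP

lemma trW_smul_smod (hP : P (smod R (ModuleCat.of R (R ⧸ Ideal.span {r}))))
    (M : ModuleCat.{u} R) : P.trW (r • 𝟙 (smod R M)) := by
  have h : r • 𝟙 (smod R M) = (singleFunctor _ 0).map (r • 𝟙 M) := by
    rw [Functor.map_smul, (singleFunctor _ 0).map_id]; rfl
  rw [h]
  exact trW_singleFunctor_map _ (prop_smod_of_smulEqZero hP (smulEqZero_kernel M))
    (prop_smod_of_smulEqZero hP (smulEqZero_cokernel M))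

lemma smulIsIso_of_rightOrthogonal_of_prop_quotient
    (hP : P (smod R (ModuleCat.of R (R ⧸ Ideal.span {r}))))
    {x : DerivedCategory (ModuleCat.{u} R)} (hx : P.rightOrthogonal x) : smulIsIso r x :=
  smulIsIso_of_rightOrthogonal hx <| prop_of_isSeparator (isSeparator_of_self R) <|
    leftOrthogonal_of_trW_smul (trW_smul_smod hP _) 2

end Derived

end Module

section EssentialImage

open DerivedCategory

lemma quasiIso_mapHomologicalComplex_app {C D ι : Type*} [Category* C] [Category* D]
    [Abelian C] [Abelian D] {c : ComplexShape ι} {F G : C ⥤ D} [F.Additive] [G.Additive]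
    [F.PreservesHomology] [G.PreservesHomology] (η : F ⟶ G) (K : HomologicalComplex C c)
    (hK : ∀ i, IsIso (η.app (K.homology i))) :
    QuasiIso ((NatTrans.mapHomologicalComplex η c).app K) where
  quasiIsoAt i := by
    rw [quasiIsoAt_iff_isIso_homologyMap]
    change IsIso (ShortComplex.homologyMap ((K.sc i).mapNatTrans η))
    have : IsIso (η.app (K.sc i).homology) := hK i
    rw [ShortComplex.homologyMap_mapNatTrans]
    infer_instance

variable {R : Type u} [CommRing R] {r : R}

lemma smulIsIso_homology {C : Type*} [Category* C] [Abelian C] [Linear R C]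
    [HasDerivedCategory C] {K : CochainComplex C ℤ} (hK : smulIsIso r (Q.obj K)) (n : ℤ) :
    smulIsIso r (K.homology n) := by
  have hQ : IsIso (Q.map (r • 𝟙 K)) := by rwa [Functor.map_smul, Q.map_id]
  have : QuasiIso (r • 𝟙 K) := (isIso_Q_map_iff_quasiIso (C := C) _).1 hQ
  have h : HomologicalComplex.homologyMap (r • 𝟙 K) n = r • 𝟙 (K.homology n) :=
    (ShortComplex.homologyMap_smul (𝟙 (K.sc n)) r).trans
      (congrArg (r • ·) (ShortComplex.homologyMap_id _))
  rw [smulIsIso, ← h]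
  infer_instance

lemma isIso_extendRestrictScalarsAdj_unit_app (A : Type u) [CommRing A] [Algebra R A]
    [IsLocalization.Away r A] {M : ModuleCat.{u} R} (hM : smulIsIso r M) :
    IsIso ((ModuleCat.extendRestrictScalarsAdj (algebraMap R A)).unit.app M) := by
  rw [ConcreteCategory.isIso_iff_bijective]
  have : @IsLocalization.Away R _ r A _ (algebraMap R A).toAlgebra := by rwa [toAlgebra_algebraMap]
  let _ := (algebraMap R A).toAlgebra
  have hloc : IsLocalizedModule (Submonoid.powers r) (TensorProduct.mk R A M 1) :=
    (isLocalizedModule_iff_isBaseChange (Submonoid.powers r) A _).2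
      (TensorProduct.isBaseChange R M A)
  refine bijective_of_isLocalizedModule (Submonoid.powers r) (TensorProduct.mk R A M 1) ?_
  rintro ⟨_, n, rfl⟩
  simpa using (smulIsIso_iff_isUnit.1 hM).pow n

variable [HasDerivedCategory.{w'} (ModuleCat.{u} R)]

lemma exists_iso_Q_obj_restrictScalars (A : Type u) [CommRing A] [Algebra R A]
    [IsLocalization.Away r A] {x : DerivedCategory (ModuleCat.{u} R)} (hx : smulIsIso r x) :
    ∃ K : CochainComplex (ModuleCat.{u} A) ℤ,
      Nonempty (x ≅ Q.obj
        (((ModuleCat.restrictScalars.{u} (algebraMap R A)).mapHomologicalComplex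
          (.up ℤ)).obj K)) := by
  let E := ModuleCat.extendScalars.{u, u, u} (algebraMap R A)
  let F := ModuleCat.restrictScalars.{u} (algebraMap R A)
  let adj : E ⊣ F := ModuleCat.extendRestrictScalarsAdj (algebraMap R A)
  have : PreservesFiniteLimits E := ModuleCat.preservesFiniteLimits_extendScalars_of_flat <|
    RingHom.flat_algebraMap_iff.2 (IsLocalization.flat _ (Submonoid.powers r))
  have : E.IsLeftAdjoint := adj.isLeftAdjoint
  have : PreservesFiniteColimits E := PreservesColimits.preservesFiniteColimits E
  have : E.Additive := Functor.additive_of_preserves_binary_products E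
  let e := Q.objObjPreimageIso x
  have hK : smulIsIso r (Q.obj (Q.objPreimage x)) := (smulIsIso r).prop_of_iso e.symm hx
  let t : Q.objPreimage x ⟶ (F.mapHomologicalComplex (.up ℤ)).obj
      ((E.mapHomologicalComplex (.up ℤ)).obj (Q.objPreimage x)) :=
    (NatTrans.mapHomologicalComplex adj.unit (.up ℤ)).app (Q.objPreimage x)
  have ht : QuasiIso t := quasiIso_mapHomologicalComplex_app adj.unit _ fun n =>
    isIso_extendRestrictScalarsAdj_unit_app A (smulIsIso_homology hK n)
  have : IsIso (Q.map t) := (isIso_Q_map_iff_quasiIso (C := ModuleCat.{u} R) t).2 ht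
  exact ⟨(E.mapHomologicalComplex (.up ℤ)).obj (Q.objPreimage x), ⟨e.symm ≪≫ asIso (Q.map t)⟩⟩

lemma smulIsIso_smod (A : Type u) [CommRing A] [Algebra R A] [IsLocalization.Away r A] :
    smulIsIso r (smod R (ModuleCat.of R A)) :=
  (smulIsIso_of_isUnit_algebraMap (IsLocalization.Away.algebraMap_isUnit r)).map _

theorem smulIsIso_iff_exists_iso (A : Type u) [CommRing A] [Algebra R A]
    [IsLocalization.Away r A] {x : DerivedCategory (ModuleCat.{u} R)} :
    smulIsIso r x ↔ ∃ K : CochainComplex (ModuleCat.{u} A) ℤ,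
      Nonempty (x ≅ Q.obj
        (((ModuleCat.restrictScalars.{u} (algebraMap R A)).mapHomologicalComplex
          (.up ℤ)).obj K)) := by
  refine ⟨exists_iso_Q_obj_restrictScalars A, ?_⟩
  rintro ⟨K, ⟨e⟩⟩
  exact (smulIsIso r).prop_of_iso e.symm (prop_Q_obj_restrictScalars (smulIsIso_smod A) K)

theorem mem_Loc_iff_smulIsIso (A : Type u) [CommRing A] [Algebra R A] [IsLocalization.Away r A]
    {x : DerivedCategory (ModuleCat.{u} R)} :
    x ∈ Loc.{u} {smod R (ModuleCat.of R A)} ↔ smulIsIso r x := by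
  constructor
  · refine prop_of_mem_Loc ?_
    rintro _ rfl
    exact smulIsIso_smod A
  · intro hx
    obtain ⟨K, ⟨e⟩⟩ := exists_iso_Q_obj_restrictScalars A hx
    exact (locProperty.{u} {smod R (ModuleCat.of R A)}).prop_of_iso e.symm
      (prop_Q_obj_restrictScalars (locProperty_of_mem (Set.mem_singleton _)) K)

theorem mem_rightOrth_Loc_iff_smulIsIso {x : DerivedCategory (ModuleCat.{u} R)} :
    x ∈ rightOrth (Loc.{u} {smod R (ModuleCat.of R (R ⧸ Ideal.span {r}))}) ↔ smulIsIso r x := by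
  constructor
  · rw [rightOrth_Loc]
    exact smulIsIso_of_rightOrthogonal_of_prop_quotient (locProperty_of_mem (Set.mem_singleton _))
  · intro hx c hc φ
    refine prop_of_mem_Loc (P := (smulIsIso r).leftOrthogonal) ?_ hc φ hx
    rintro _ rfl
    exact ((smulEqZero_quotient r).map _).leftOrthogonal_smulIsIso

end EssentialImage

/-- Theorem: for `f ∈ R`, one has `Loc(R/(f))^⊥ = Loc(R_f)` in `D(R)`; moreover
`Loc(R_f)` is the essential image of the functor `D(R_f) → D(R)` induced by
restriction of scalars along `R → R_f` (an object lies in `Loc(R_f)` iff it is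
isomorphic to the image of a complex of `R_f`-modules under restriction of
scalars). -/
theorem rightOrth_loc_quotient_single_eq_loc_localization (R : Type u) [CommRing R]
    [HasDerivedCategory.{w'} (ModuleCat.{u} R)] (f : R) :
    rightOrth (Loc.{u} {smod R (ModuleCat.of R (R ⧸ Ideal.span {f}))}) =
      Loc.{u} {smod R (ModuleCat.of R (Localization.Away f))} ∧
    (∀ x : DerivedCategory (ModuleCat.{u} R),
      x ∈ Loc.{u} {smod R (ModuleCat.of R (Localization.Away f))} ↔
      ∃ K : CochainComplex (ModuleCat.{u} (Localization.Away f)) ℤ,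
        Nonempty (x ≅ DerivedCategory.Q.obj
          (((ModuleCat.restrictScalars.{u}
              (algebraMap R (Localization.Away f))).mapHomologicalComplex
                (ComplexShape.up ℤ)).obj K))) :=
  ⟨Set.ext fun _ => mem_rightOrth_Loc_iff_smulIsIso.trans (mem_Loc_iff_smulIsIso _).symm,
    fun _ => (mem_Loc_iff_smulIsIso (r := f) _).trans (smulIsIso_iff_exists_iso _)⟩
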